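/- Fix b ∈ ℝ and for each integer n ≥ 3 let F_n(x) = −2cos(2π/n) + 2x + n·x^{n−1} + 2cos(2π/n)(1−n)·x^n − (2−n)·x^{n+1}. Then lim_{n→∞} n²·( F_n(1 − b/n) − e^{−b}(4π² + 2b + b² − 2b·e^b)/n ) = e^{−b}·(−b⁴ − 8π² − 4b²π² + 8e^b·π²)/2. -/

import Mathlib

/-!
At `c = 1` the polynomial `-2c + 2x + n x^(n-1) + 2c(1-n) x^n - (2-n) x^(n+1)` is
`(1 - x) (x^(n-1) (n - (n-2)x) - 2)`: the leading terms cancel because of the factor `1 - x`, which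
is of order `1/n` at the points of interest, and since `c = cos (2π/n)` differs from `1` by order
`1/n²`, the rest contributes `2(1 - c) (1 + (n-1) x^n)`. What is left needs only first-order
corrections: `n ((1 + t/n)^n - e^t) → -t²/2 · e^t`, which is the chain rule for `exp` applied to
`n log (1 + t/n)`, and `n (n² (1 - cos (θ/n)) - θ²/2) → 0`, because the cosine has no cubic term.
-/

open Real Filter

/-- `F_n(x) = −2cos(2π/n) + 2x + n·x^{n−1} + 2cos(2π/n)(1−n)·x^n − (2−n)·x^{n+1}` on `ℝ`. -/
noncomputable def F (n : ℕ) (x : ℝ) : ℝ :=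
  -2 * Real.cos (2 * π / n) + 2 * x + (n : ℝ) * x ^ (n - 1)
    + 2 * Real.cos (2 * π / n) * (1 - (n : ℝ)) * x ^ n
    - (2 - (n : ℝ)) * x ^ (n + 1)

open Asymptotics Bornology Topology

theorem isBigO_log_one_sub_add_sum_range (k : ℕ) :
    (fun x : ℝ ↦ log (1 - x) + ∑ i ∈ Finset.range k, x ^ (i + 1) / (i + 1))
      =O[𝓝 0] fun x ↦ x ^ (k + 1) := by
  have hsmall : ∀ᶠ x : ℝ in 𝓝 0, |x| < 1 / 2 :=
    continuous_abs.continuousAt.eventually_lt_const (by norm_num)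
  refine .of_bound 2 ?_
  filter_upwards [hsmall] with x hx
  rw [norm_eq_abs, norm_eq_abs, abs_pow, add_comm]
  calc _ ≤ |x| ^ (k + 1) / (1 - |x|) := abs_log_sub_add_sum_range_le (by linarith) k
    _ ≤ |x| ^ (k + 1) / (1 / 2) := by gcongr; linarith
    _ = 2 * |x| ^ (k + 1) := by ring

theorem isBigO_cos_sub : (fun x : ℝ ↦ cos x - (1 - x ^ 2 / 2)) =O[𝓝 0] fun x ↦ x ^ 4 := by
  have hsmall : ∀ᶠ x : ℝ in 𝓝 0, |x| < 1 :=
    continuous_abs.continuousAt.eventually_lt_const (by norm_num)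
  refine .of_bound (5 / 96) ?_
  filter_upwards [hsmall] with x hx
  simpa only [norm_eq_abs, abs_pow, mul_comm] using cos_bound hx.le

theorem tendsto_pow_smul_comp_div_cobounded {𝕜 E : Type*} [NormedField 𝕜] [NormedAddCommGroup E]
    [NormedSpace 𝕜 E] {f : 𝕜 → E} {k : ℕ} (hf : f =o[𝓝 0] fun x ↦ x ^ k) (t : 𝕜) :
    Tendsto (fun x ↦ x ^ k • f (t / x)) (cobounded 𝕜) (𝓝 0) := by
  have hdiv : Tendsto (fun x : 𝕜 ↦ t / x) (cobounded 𝕜) (𝓝 0) := by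
    simpa only [div_eq_mul_inv, mul_zero] using tendsto_inv₀_cobounded.const_mul t
  have hbounded : (fun x : 𝕜 ↦ x ^ k • (t / x) ^ k) =O[cobounded 𝕜] fun _ ↦ (1 : 𝕜) := by
    refine (isBigO_const_const (t ^ k) one_ne_zero (cobounded 𝕜)).congr' ?_ .rfl
    filter_upwards [eventually_ne_cobounded 0] with x hx
    rw [smul_eq_mul, ← mul_pow, mul_div_cancel₀ t hx]
  exact (isLittleO_one_iff 𝕜).1
    (((isBigO_refl _ _).smul_isLittleO (hf.comp_tendsto hdiv)).trans_isBigO hbounded)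

theorem tendsto_mul_mul_log_one_add_div_sub (t : ℝ) :
    Tendsto (fun x ↦ x * (x * log (1 + t / x) - t)) atTop (𝓝 (-t ^ 2 / 2)) := by
  have hlog : (fun x : ℝ ↦ log (1 - x) + ∑ i ∈ Finset.range 2, x ^ (i + 1) / (i + 1))
      =o[𝓝 0] fun x ↦ x ^ 2 :=
    (isBigO_log_one_sub_add_sum_range 2).trans_isLittleO (isLittleO_pow_pow (by norm_num))
  have h := ((tendsto_pow_smul_comp_div_cobounded hlog (-t)).mono_left
    IsOrderBornology.atTop_le_cobounded).add_const (-t ^ 2 / 2)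
  rw [zero_add] at h
  refine h.congr' ?_
  filter_upwards [eventually_ne_atTop 0] with x hx
  simp only [Finset.sum_range_succ, Finset.sum_range_zero, smul_eq_mul, neg_div, sub_neg_eq_add]
  push_cast
  field_simp
  ring

theorem tendsto_mul_one_add_div_rpow_sub_exp (t : ℝ) :
    Tendsto (fun x ↦ x * ((1 + t / x) ^ x - exp t)) atTop (𝓝 (-t ^ 2 / 2 * exp t)) := by
  have hlim : Tendsto (fun x ↦ x * log (1 + t / x) - t) atTop (𝓝 0) :=
    tendsto_sub_nhds_zero_iff.2 (tendsto_mul_log_one_add_div_atTop t)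
  have hpos : ∀ᶠ x : ℝ in atTop, 0 < 1 + t / x := by
    have : Tendsto (fun x : ℝ ↦ 1 + t / x) atTop (𝓝 (1 + 0)) :=
      (tendsto_const_nhds.div_atTop tendsto_id).const_add 1
    exact this.eventually_const_lt (by norm_num)
  have hexp := (hasDerivAt_exp t).hasFDerivAt.hasFDerivWithinAt (s := Set.univ) |>.lim hlim
    (.of_forall fun _ ↦ Set.mem_univ _) (tendsto_mul_mul_log_one_add_div_sub t)
  refine hexp.congr' ?_
  filter_upwards [hpos] with x hx
  rw [rpow_def_of_pos hx, add_sub_cancel, mul_comm x (log _), smul_eq_mul]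

theorem tendsto_mul_one_add_div_pow_sub_exp (t : ℝ) :
    Tendsto (fun n : ℕ ↦ n * ((1 + t / n) ^ n - exp t)) atTop (𝓝 (-t ^ 2 / 2 * exp t)) :=
  (tendsto_mul_one_add_div_rpow_sub_exp t).comp tendsto_natCast_atTop_atTop |>.congr (by simp)

theorem tendsto_one_add_div_pow_pred_exp (t : ℝ) :
    Tendsto (fun n : ℕ ↦ (1 + t / n) ^ (n - 1)) atTop (𝓝 (exp t)) := by
  have hbase : Tendsto (fun n : ℕ ↦ 1 + t / n) atTop (𝓝 1) := by
    simpa using (tendsto_const_div_atTop_nhds_zero_nat t).const_add 1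
  have hquot := (tendsto_one_add_div_pow_exp t).div hbase one_ne_zero
  rw [div_one] at hquot
  refine hquot.congr' ?_
  filter_upwards [hbase.eventually_ne one_ne_zero, eventually_ne_atTop 0] with n hx hn
  rw [Pi.div_apply, div_eq_iff hx, pow_sub_one_mul hn]

theorem tendsto_mul_sq_mul_one_sub_cos_div_sub (θ : ℝ) :
    Tendsto (fun x ↦ x * (x ^ 2 * (1 - cos (θ / x)) - θ ^ 2 / 2)) atTop (𝓝 0) := by
  have hcos : (fun x : ℝ ↦ cos x - (1 - x ^ 2 / 2)) =o[𝓝 0] fun x ↦ x ^ 3 :=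
    isBigO_cos_sub.trans_isLittleO (isLittleO_pow_pow (by norm_num))
  have h := ((tendsto_pow_smul_comp_div_cobounded hcos θ).mono_left
    IsOrderBornology.atTop_le_cobounded).neg
  rw [neg_zero] at h
  refine h.congr' ?_
  filter_upwards [eventually_ne_atTop 0] with x hx
  rw [smul_eq_mul]
  field_simp
  ring

theorem tendsto_sq_mul_one_sub_cos_div (θ : ℝ) :
    Tendsto (fun x ↦ x ^ 2 * (1 - cos (θ / x))) atTop (𝓝 (θ ^ 2 / 2)) :=
  tendsto_sub_nhds_zero_iff.1 <| tendsto_zero_of_isBoundedUnder_smul_of_tendsto_cobounded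
    (tendsto_mul_sq_mul_one_sub_cos_div_sub θ).norm.isBoundedUnder_le
    (tendsto_id'.mpr IsOrderBornology.atTop_le_cobounded)

theorem tendsto_mul_mul_sub_mul {ι R : Type*} [CommRing R] [TopologicalSpace R]
    [IsTopologicalRing R] {l : Filter ι} {r u v : ι → R} {a b c d : R}
    (hu : Tendsto (fun i ↦ r i * (u i - a)) l (𝓝 c)) (hv : Tendsto v l (𝓝 b))
    (hrv : Tendsto (fun i ↦ r i * (v i - b)) l (𝓝 d)) :
    Tendsto (fun i ↦ r i * (u i * v i - a * b)) l (𝓝 (c * b + a * d)) :=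
  ((hu.mul hv).add (hrv.const_mul a)).congr fun i ↦ by ring

theorem F_eq_one_sub_mul_add {n : ℕ} (hn : n ≠ 0) (x : ℝ) :
    F n x = (1 - x) * (x ^ (n - 1) * (n - (n - 2) * x) - 2)
      + 2 * (1 - cos (2 * π / n)) * (1 + (n - 1) * x ^ n) := by
  rw [F, pow_succ, ← pow_sub_one_mul hn x]
  ring

theorem sq_mul_F_one_add_div {n : ℕ} (hn : n ≠ 0) (t : ℝ) :
    n ^ 2 * F n (1 + t / n) = n * (t * (t - 2) * (1 + t / n) ^ n + 2 * t)
      - t ^ 3 * (1 + t / n) ^ (n - 1)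
      + 2 * (n ^ 2 * (1 - cos (2 * π / n))) * (1 + (n - 1) * (1 + t / n) ^ n) := by
  rw [F_eq_one_sub_mul_add hn, ← pow_sub_one_mul hn (1 + t / (n : ℝ))]
  field_simp
  ring

/-- Second-order asymptotics: for fixed `b ∈ ℝ`,
`n²·(F_n(1 − b/n) − e^{−b}(4π² + 2b + b² − 2b·e^b)/n)`
converges to `e^{−b}·(−b⁴ − 8π² − 4b²π² + 8e^b·π²)/2` as `n → ∞`. -/
theorem nsqF_tendsto (b : ℝ) :
    Tendsto (fun n : ℕ => (n : ℝ) ^ 2 *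
        (F n (1 - b / n) -
          Real.exp (-b) * (4 * π ^ 2 + 2 * b + b ^ 2 - 2 * b * Real.exp b) / n)) atTop
      (nhds (Real.exp (-b) *
        (-b ^ 4 - 8 * π ^ 2 - 4 * b ^ 2 * π ^ 2 + 8 * Real.exp b * π ^ 2) / 2)) := by
  obtain ⟨t, rfl⟩ : ∃ t, b = -t := ⟨-b, (neg_neg b).symm⟩
  have hpow := tendsto_one_add_div_pow_exp t
  have hpow_rate := tendsto_mul_one_add_div_pow_sub_exp t
  have hcos := (tendsto_sq_mul_one_sub_cos_div (2 * π)).comp tendsto_natCast_atTop_atTop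
  have hcos_rate :=
    (tendsto_mul_sq_mul_one_sub_cos_div_sub (2 * π)).comp tendsto_natCast_atTop_atTop
  have hcospow_rate := tendsto_mul_mul_sub_mul hcos_rate hpow hpow_rate
  have hexp : exp t * exp (-t) = 1 := by rw [← exp_add, add_neg_cancel, exp_zero]
  have hsum := (((hpow_rate.const_mul (t * (t - 2))).sub
    ((tendsto_one_add_div_pow_pred_exp t).const_mul (t ^ 3))).add (hcospow_rate.const_mul 2)).add
    ((hcos.mul (hpow.const_sub 1)).const_mul 2)
  convert hsum.congr' ?_ using 2
  · rw [neg_neg]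
    linear_combination (4 * π ^ 2) * hexp
  · filter_upwards [eventually_ne_atTop 0] with n hn
    rw [neg_div, sub_neg_eq_add, neg_neg, mul_sub _ (F n _), sq_mul_F_one_add_div hn]
    simp only [Function.comp_apply]
    field_simp
    linear_combination (2 * t * n) * hexp
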